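/- arXiv:1706.01579 — 2 statements merged into one kernel-verified Lean document; each statement's English description precedes it below -/
import Mathlib

section
/- Let k ≥ 1 and let S ⊆ ℤ⁺ be enumerated in increasing order as s₁ < s₂ < s₃ < ⋯, and suppose that s_{i+k} − s_i → ∞ as i → ∞ (i.e., for every M there is an N such that s_{i+k} − s_i > M for all i ≥ N). Then S is not (k+2)-walkable: there exists a coloring χ : ℤ → Fin (k+2) admitting no infinite monochromatic walk over S. In particular the walkability order of S is at most k+1. -/
/-- `S` is `m`-walkable: every coloring `χ : ℤ → Fin m` admits an infinite increasing
monochromatic sequence whose consecutive differences lie in `S`. -/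
def IsKWalkable (S : Set ℤ) (m : ℕ) : Prop :=
  ∀ χ : ℤ → Fin m, ∃ a : ℕ → ℤ, StrictMono a ∧
    (∀ i : ℕ, a (i + 1) - a i ∈ S) ∧ ∀ i : ℕ, χ (a i) = χ (a 0)

/-!
Cut `ℕ` at a rapidly growing sequence of barriers `n 0 < n 1 < ⋯`, chosen so that for
`n (j + 1) ≤ y` at most `k` elements of `S` lie in `(y - n j, y]`. Then at most `k` steps over `S`
into `y` start in `ℕ` and jump over an entire block. Hence `k + 2` colors suffice to color `ℕ`
greedily so that no such long step is monochromatic and so that, moreover, the `j`-th block misses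
the color `j % (k + 2)`. A monochromatic walk now meets every block from some point on, including
one that misses its color.
-/

open Filter Finset

theorem exists_greedy_coloring {α κ : Type*} [LT α] [WellFoundedLT α] [Fintype κ]
    {F : α → Finset κ} {P : α → Finset α} (hlt : ∀ y, ∀ x ∈ P y, x < y)
    (hcard : ∀ y, #(F y) + #(P y) < Fintype.card κ) :
    ∃ f : α → κ, ∀ y, f y ∉ F y ∧ ∀ x ∈ P y, f x ≠ f y := by
  classical
  have exists_free (y : α) (g : ∀ x, x < y → κ) :
      ∃ z, z ∉ F y ∧ ∀ x, ∀ hx : x ∈ P y, g x (hlt y x hx) ≠ z := by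
    let used : Finset κ := (P y).attach.image fun x ↦ g x.1 (hlt y x.1 x.2)
    have hforbidden : #(F y ∪ used) < #(univ : Finset κ) :=
      calc #(F y ∪ used) ≤ #(F y) + #used := card_union_le _ _
        _ ≤ #(F y) + #(P y) := by grw [card_image_le, card_attach]
        _ < #univ := hcard y
    obtain ⟨z, -, hz⟩ := exists_mem_notMem_of_card_lt_card hforbidden
    rw [notMem_union] at hz
    exact ⟨z, hz.1, fun x hx h ↦ hz.2 (mem_image.2 ⟨⟨x, hx⟩, mem_attach _ _, h⟩)⟩
  choose color hcolor using exists_free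
  refine ⟨wellFounded_lt.fix color, fun y ↦ ?_⟩
  rw [wellFounded_lt.fix_eq]
  exact hcolor y _

theorem exists_strictMono_forall_of_eventually {α : Type*} [Preorder α] [IsDirectedOrder α]
    [Nonempty α] [NoMaxOrder α] {p : α → α → Prop} (h : ∀ m, ∀ᶠ y in atTop, p m y) :
    ∃ n : ℕ → α, StrictMono n ∧ ∀ j, ∀ y ≥ n (j + 1), p (n j) y := by
  have hnext (s : Finset α) : ∀ᶠ m' in atTop, ∀ m ∈ s, m < m' ∧ ∀ y ≥ m', p m y :=
    (eventually_all_finset s).2 fun m _ ↦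
      (eventually_gt_atTop m).and (eventually_forall_ge_atTop.2 (h m))
  obtain ⟨n, -, hn⟩ := exists_seq_of_forall_finset_exists (fun _ ↦ True)
    (fun m m' ↦ m < m' ∧ ∀ y ≥ m', p m y) fun s _ ↦ (hnext s).exists.imp fun _ h ↦ ⟨trivial, h⟩
  exact ⟨n, fun i j hij ↦ (hn i j hij).1, fun j ↦ (hn j (j + 1) j.lt_succ_self).2⟩

theorem exists_eq_of_forall_le_succ {β : Type*} [LinearOrder β] [SuccOrder β] {u : ℕ → β}
    (hu : ∀ i, u (i + 1) ≤ Order.succ (u i)) {m : β} (h0 : u 0 ≤ m) (hm : ∃ i, m ≤ u i) :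
    ∃ i, u i = m := by
  classical
  refine ⟨Nat.find hm, le_antisymm ?_ (Nat.find_spec hm)⟩
  rcases h : Nat.find hm with _ | i
  · exact h0
  · have hi : u i < m := not_le.1 (Nat.find_min hm (h ▸ i.lt_succ_self))
    exact (hu i).trans (Order.succ_le_of_lt hi)

theorem exists_strictMono_natCast_eq_add {a : ℕ → ℤ} (ha : StrictMono a) :
    ∃ (p : ℕ) (b : ℕ → ℕ), StrictMono b ∧ ∀ i, a (p + i) = b i := by
  have hgrow (i : ℕ) : a 0 + i ≤ a i := by
    induction i with
    | zero => simp
    | succ i ih => have := ha i.lt_succ_self; grind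
  have hnonneg (i : ℕ) : 0 ≤ a ((a 0).natAbs + i) := by grind
  choose b hb using fun i ↦ Int.eq_ofNat_of_zero_le (hnonneg i)
  refine ⟨_, b, fun i j hij ↦ ?_, hb⟩
  exact_mod_cast hb i ▸ hb j ▸ ha (Nat.add_lt_add_left hij _)

theorem IsKWalkable.exists_nat_walk {S : Set ℤ} {m : ℕ} (hS : IsKWalkable S m) (f : ℕ → Fin m) :
    ∃ a : ℕ → ℕ, StrictMono a ∧ (∀ i, (a (i + 1) - a i : ℤ) ∈ S) ∧ ∀ i, f (a i) = f (a 0) := by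
  obtain ⟨a, ha, hstep, hcolor⟩ := hS fun z ↦ f z.toNat
  obtain ⟨p, b, hb, hab⟩ := exists_strictMono_natCast_eq_add ha
  have hfb (i : ℕ) : f (b i) = f (a 0).toNat := by simpa [hab] using hcolor (p + i)
  exact ⟨b, hb, fun i ↦ hab i ▸ hab (i + 1) ▸ hstep (p + i), fun i ↦ by rw [hfb, hfb]⟩

/-- Every window of fixed length contains at most `k` elements of `S` once it is far enough to the
right. For `S = {s₁ < s₂ < ⋯}` this says that `s_{i+k} - s_i → ∞`. -/
def IsEventuallySparse (S : Set ℤ) (k : ℕ) : Prop :=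
  ∀ M : ℤ, ∀ᶠ y : ℤ in atTop, (S ∩ Set.Ioc (y - M) y).ncard ≤ k

theorem isEventuallySparse_range {k : ℕ} {s : ℕ → ℤ} (hs : StrictMono s)
    (hgap : Tendsto (fun i ↦ s (i + k) - s i) atTop atTop) :
    IsEventuallySparse (Set.range s) k := by
  intro M
  obtain ⟨N, hN⟩ := eventually_atTop.1 (hgap.eventually_ge_atTop M)
  filter_upwards [eventually_ge_atTop (s N + M)] with y hy
  let I := s ⁻¹' Set.Ioc (y - M) y
  have hI : I ⊆ Set.Ico (sInf I) (sInf I + k) := fun i hi ↦ by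
    have hleast : y - M < s (sInf I) := (Nat.sInf_mem (s := I) ⟨i, hi⟩).1
    have hNI : N < sInf I := hs.lt_iff_lt.1 (by omega)
    refine ⟨Nat.sInf_le hi, hs.lt_iff_lt.1 ?_⟩
    calc s i ≤ y := hi.2
      _ < s (sInf I) + M := by omega
      _ ≤ s (sInf I + k) := by have := hN _ hNI.le; omega
  calc (Set.range s ∩ Set.Ioc (y - M) y).ncard = (s '' I).ncard := by
        rw [Set.image_preimage_eq_range_inter]
    _ = I.ncard := Set.ncard_image_of_injective _ hs.injective
    _ ≤ (Set.Ico (sInf I) (sInf I + k)).ncard := Set.ncard_le_ncard hI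
    _ = k := by simp [Set.ncard_eq_toFinset_card']

/-- The index of the block containing `y` when `ℕ` is cut at the barriers `n 0 < n 1 < ⋯`: block `0`
lies below `n 0`, and block `j + 1` is `[n j, n (j + 1))`. -/
noncomputable def blockIndex (n : ℕ → ℕ) (y : ℕ) : ℕ :=
  sInf {j | y < n j}

open Classical in
/-- The starting points in `ℕ` of the steps over `S` into `y` that jump over at least one entire
block between the barriers `n`. -/
noncomputable def longStepSources (S : Set ℤ) (n : ℕ → ℕ) (y : ℕ) : Finset ℕ :=
  {x ∈ range y | (y - x : ℤ) ∈ S ∧ blockIndex n x + 1 < blockIndex n y}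

section Blocks

variable {S : Set ℤ} {n : ℕ → ℕ} {j k x y : ℕ}

theorem lt_blockIndex_iff (hn : StrictMono n) : j < blockIndex n y ↔ n j ≤ y := by
  refine ⟨fun h ↦ not_lt.1 fun hy ↦ Nat.notMem_of_lt_sInf h hy, fun h ↦ ?_⟩
  have hmem : y < n (blockIndex n y) :=
    Nat.sInf_mem (s := {j | y < n j}) ⟨y + 1, y.lt_succ_self.trans_le hn.le_apply⟩
  exact hn.lt_iff_lt.1 (h.trans_lt hmem)

theorem tendsto_blockIndex (hn : StrictMono n) : Tendsto (blockIndex n) atTop atTop :=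
  tendsto_atTop.2 fun j ↦ (eventually_ge_atTop (n j)).mono fun _ h ↦
    ((lt_blockIndex_iff hn).2 h).le

theorem mem_longStepSources : x ∈ longStepSources S n y ↔
    x < y ∧ (y - x : ℤ) ∈ S ∧ blockIndex n x + 1 < blockIndex n y := by
  simp [longStepSources]

theorem card_longStepSources_le (hn : StrictMono n)
    (hsparse : ∀ j, ∀ y ≥ n (j + 1), (S ∩ Set.Ioc (y - n j : ℤ) y).ncard ≤ k) (y : ℕ) :
    #(longStepSources S n y) ≤ k := by
  rcases Nat.lt_or_ge (blockIndex n y) 2 with hy | hy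
  · have hempty : longStepSources S n y = ∅ := eq_empty_of_forall_notMem fun x hx ↦ by
      have := (mem_longStepSources.1 hx).2.2
      omega
    simp [hempty]
  obtain ⟨j, hj⟩ := Nat.exists_eq_add_of_le' hy
  have hjy : n (j + 1) ≤ y := (lt_blockIndex_iff hn).1 (by omega)
  have hmaps : ∀ x ∈ longStepSources S n y, (y - x : ℤ) ∈ S ∩ Set.Ioc (y - n j : ℤ) y := by
    intro x hx
    obtain ⟨-, hxS, hxy⟩ := mem_longStepSources.1 hx
    have hxj : x < n j := not_le.1 fun h ↦ by
      have := (lt_blockIndex_iff hn).2 h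
      omega
    exact ⟨hxS, by omega, by omega⟩
  calc #(longStepSources S n y) = (longStepSources S n y : Set ℕ).ncard :=
        (Set.ncard_coe_finset _).symm
    _ ≤ (S ∩ Set.Ioc (y - n j : ℤ) y).ncard :=
        Set.ncard_le_ncard_of_injOn _ hmaps (fun x _ x' _ h ↦ by simpa using h)
          ((Set.finite_Ioc _ _).inter_of_right S)
    _ ≤ k := hsparse j y hjy

theorem IsEventuallySparse.exists_coloring (hS : IsEventuallySparse S k) :
    ∃ (f : ℕ → Fin (k + 2)) (b : ℕ → ℕ), Tendsto b atTop atTop ∧ (∀ y, f y ≠ b y % (k + 2)) ∧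
      ∀ x y : ℕ, x < y → (y - x : ℤ) ∈ S → f x = f y → b y ≤ b x + 1 := by
  obtain ⟨n, hn, hsparse⟩ := exists_strictMono_forall_of_eventually
    (p := fun m y : ℕ ↦ (S ∩ Set.Ioc (y - m : ℤ) y).ncard ≤ k) fun m ↦ (hS m).natCast_atTop
  have hcard (y : ℕ) :
      #{Fin.ofNat (k + 2) (blockIndex n y)} + #(longStepSources S n y) <
        Fintype.card (Fin (k + 2)) := by
    have := card_longStepSources_le hn hsparse y
    simp only [card_singleton, Fintype.card_fin]
    omega
  obtain ⟨f, hf⟩ := exists_greedy_coloring (fun y x hx ↦ (mem_longStepSources.1 hx).1) hcard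
  refine ⟨f, blockIndex n, tendsto_blockIndex hn, fun y h ↦ ?_, fun x y hxy hxyS hcolor ↦ ?_⟩
  · exact (hf y).1 (mem_singleton.2 (Fin.ext h))
  · exact not_lt.1 fun hlong ↦ (hf y).2 x (mem_longStepSources.2 ⟨hxy, hxyS, hlong⟩) hcolor

end Blocks

theorem not_walkable_of_sparse_general {S : Set ℤ} {k : ℕ} (hS : IsEventuallySparse S k) :
    ¬ IsKWalkable S (k + 2) := by
  intro hwalk
  obtain ⟨f, b, hb, hmiss, hshort⟩ := hS.exists_coloring
  obtain ⟨a, ha, hstep, hcolor⟩ := hwalk.exists_nat_walk f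
  have hsucc (i : ℕ) : b (a (i + 1)) ≤ b (a i) + 1 :=
    hshort _ _ (ha i.lt_succ_self) (hstep i) (by rw [hcolor, hcolor (i + 1)])
  have hunbounded : Tendsto (fun i ↦ b (a i)) atTop atTop := hb.comp ha.tendsto_atTop
  obtain ⟨j, hj, hjcolor⟩ := frequently_atTop.1 (Nat.frequently_mod_eq (f (a 0)).isLt) (b (a 0))
  obtain ⟨i, hi⟩ := exists_eq_of_forall_le_succ hsucc hj (hunbounded.eventually_ge_atTop j).exists
  exact hmiss (a i) (by rw [hcolor, hi, hjcolor])

/-- If `S = {s₁ < s₂ < ⋯} ⊆ ℤ⁺` satisfies `s_{i+k} − s_i → ∞`, then `S` is not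
`(k+2)`-walkable. -/
theorem not_walkable_of_sparse (k : ℕ) (hk : 1 ≤ k) (s : ℕ → ℤ) (hmono : StrictMono s)
    (hpos : ∀ i, 0 < s i)
    (hgap : ∀ M : ℤ, ∃ N : ℕ, ∀ i ≥ N, M < s (i + k) - s i) :
    ¬ IsKWalkable (Set.range s) (k + 2) :=
  not_walkable_of_sparse_general <| isEventuallySparse_range hmono <|
    tendsto_atTop.2 fun M ↦ eventually_atTop.2 <| (hgap M).imp fun _ h i hi ↦ (h i hi).le
end

section
/- Let S ⊆ ℤ⁺ be enumerated in increasing order as s₁ < s₂ < s₃ < ⋯, and suppose that the gaps s_{i+1} − s_i tend to infinity as i → ∞. Then S is not 3-walkable, so ord(S) ≤ 2. -/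
/-!
Cut `ℕ` into blocks that grow so fast that every `x` is reached by at most one step from a block
at least two before its own: two such steps would have large lengths in `S` that are close together. With `m ≥ 3` colors one can color greedily so that `x` avoids both the color of the
origin of that one step and the index of its own block modulo `m`. A monochromatic walk then never
skips a block, so it enters a block whose index is congruent to the color of the walk, which is
impossible.
-/

open Filter

/-- `E` has sparse predecessors if, for every `M`, all but finitely many vertices have at most one
`E`-predecessor below `M`. This is the property of the graph of steps that makes three colors
suffice. -/
def HasSparsePredecessors (E : ℕ → ℕ → Prop) : Prop :=
  ∀ M, ∀ᶠ x in atTop, {p | p < M ∧ E p x}.Subsingleton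

/-- `S` has growing gaps if, for every `M`, all sufficiently large elements of `S` are more than `M`
below every larger element of `S`. Unlike a condition on the gaps of an enumeration, this makes
sense for every set of integers. -/
def HasGrowingGaps (S : Set ℤ) : Prop :=
  ∀ M : ℤ, ∀ᶠ s in atTop, s ∈ S → ∀ t ∈ S, s < t → M < t - s

theorem exists_coloring_avoiding {α C : Type*} {r : α → α → Prop} (hC : 3 ≤ Cardinal.mk C)
    (hwf : WellFounded r) (hr : Relator.LeftUnique r) (forbidden : α → C) :
    ∃ f : α → C, (∀ x, f x ≠ forbidden x) ∧ ∀ p x, r p x → f p ≠ f x := by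
  have exists_color (x : α) (g : ∀ p, r p x → C) :
      ∃ c, c ≠ forbidden x ∧ ∀ p (hp : r p x), g p hp ≠ c := by
    by_cases hx : ∃ p, r p x
    · obtain ⟨p, hp⟩ := hx
      obtain ⟨c, hc, hcp⟩ := Cardinal.exists_ne_ne_of_three_le hC (forbidden x) (g p hp)
      refine ⟨c, hc, fun q hq => ?_⟩
      obtain rfl := hr hp hq
      exact hcp.symm
    · obtain ⟨c, hc, -⟩ := Cardinal.exists_ne_ne_of_three_le hC (forbidden x) (forbidden x)
      exact ⟨c, hc, fun p hp => absurd ⟨p, hp⟩ hx⟩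
  choose color color_ne_forbidden ne_color using exists_color
  refine ⟨hwf.fix color, fun x => ?_, fun p x hp => ?_⟩
  · rw [hwf.fix_eq color x]
    exact color_ne_forbidden x _
  · rw [hwf.fix_eq color x]
    exact ne_color x (fun q _ => hwf.fix color q) p hp

theorem exists_galoisConnection_of_strictMono {L : ℕ → ℕ} (hL : StrictMono L) (hL0 : L 0 = 0) :
    ∃ lvl : ℕ → ℕ, GaloisConnection L lvl := by
  refine ⟨fun x => Nat.findGreatest (fun k => L k ≤ x) x, fun n x => ⟨fun hn => ?_, fun hn => ?_⟩⟩
  · exact Nat.le_findGreatest (hL.le_apply.trans hn) hn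
  · have hgreatest : L (Nat.findGreatest (fun k => L k ≤ x) x) ≤ x :=
      Nat.findGreatest_spec (P := fun k => L k ≤ x) x.zero_le (hL0.trans_le x.zero_le)
    exact (hL.monotone hn).trans hgreatest

theorem HasSparsePredecessors.exists_level {E : ℕ → ℕ → Prop} (hE : HasSparsePredecessors E) :
    ∃ lvl : ℕ → ℕ, Tendsto lvl atTop atTop ∧
      ∀ x, {p | lvl p + 1 < lvl x ∧ E p x}.Subsingleton := by
  choose g hg using fun M => eventually_atTop.1 (hE M)
  let L : ℕ → ℕ := fun n => (fun M => M + g M + 1)^[n] 0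
  have hL_succ (n : ℕ) : L (n + 1) = L n + g (L n) + 1 := Function.iterate_succ_apply' _ n 0
  have hL : StrictMono L := strictMono_nat_of_lt_succ fun n => by rw [hL_succ]; omega
  -- `lvl x` is the index `n` of the block `L n ≤ x < L (n + 1)`.
  obtain ⟨lvl, hgc⟩ := exists_galoisConnection_of_strictMono hL rfl
  refine ⟨lvl, tendsto_atTop_atTop.2 fun n => ⟨L n, fun x hx => (hgc n x).1 hx⟩, fun x => ?_⟩
  rcases hx : lvl x with _ | n
  · rintro p ⟨hp, -⟩
    omega
  · have hgx : g (L n) ≤ x := by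
      have : L (n + 1) ≤ x := (hgc _ _).2 hx.ge
      rw [hL_succ] at this
      omega
    refine (hg (L n) x hgx).anti fun p hp => ⟨hgc.lt_iff_lt.2 ?_, hp.2⟩
    exact Nat.lt_of_succ_lt_succ hp.1

theorem mem_range_of_le_add_one {α : Type*} [LinearOrder α] [Add α] [One α] [SuccAddOrder α]
    {u : ℕ → α} (hu : ∀ i, u (i + 1) ≤ u i + 1) {v : α} (h0 : u 0 ≤ v) {n : ℕ} (hn : v ≤ u n) :
    v ∈ Set.range u := by
  induction n with
  | zero => exact ⟨0, h0.antisymm hn⟩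
  | succ n ih =>
    rcases le_or_gt v (u n) with h | h
    · exact ih h
    · exact ⟨n + 1, ((hu n).trans (Order.add_one_le_of_lt h)).antisymm hn⟩

theorem HasSparsePredecessors.exists_coloring {E : ℕ → ℕ → Prop} (hE : HasSparsePredecessors E)
    {m : ℕ} (hm : 3 ≤ m) :
    ∃ f : ℕ → Fin m, ∀ a : ℕ → ℕ, a.Injective → (∀ i, E (a i) (a (i + 1))) →
      ¬ ∀ i, f (a i) = f (a 0) := by
  have : NeZero m := ⟨by omega⟩
  obtain ⟨lvl, hlvl, hfar⟩ := hE.exists_level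
  have hwf : WellFounded fun p x => lvl p + 1 < lvl x ∧ E p x :=
    Subrelation.wf (fun h => Nat.lt_of_succ_lt h.1) (measure lvl).wf
  obtain ⟨f, hforbidden, hf⟩ := exists_coloring_avoiding (by simpa using hm) hwf
    (fun _ _ x hp hq => hfar x hp hq) (fun x => Fin.ofNat m (lvl x))
  refine ⟨f, fun a ha hstep hcol => ?_⟩
  have hslow (i : ℕ) : lvl (a (i + 1)) ≤ lvl (a i) + 1 := by
    by_contra! hlt
    exact hf _ _ ⟨hlt, hstep i⟩ (by rw [hcol, hcol (i + 1)])
  let v := m * lvl (a 0) + f (a 0)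
  have hv : lvl (a 0) ≤ v := (Nat.le_mul_of_pos_left _ (by omega)).trans (Nat.le_add_right _ _)
  have hv_color : Fin.ofNat m v = f (a 0) := by
    ext
    simp [v, Nat.mod_eq_of_lt]
  obtain ⟨n, hn⟩ := ((hlvl.comp ha.nat_tendsto_atTop).eventually_ge_atTop v).exists
  obtain ⟨j, hj⟩ : v ∈ Set.range fun i => lvl (a i) := mem_range_of_le_add_one hslow hv hn
  refine hforbidden (a j) ?_
  calc
    f (a j) = f (a 0) := hcol j
    _ = Fin.ofNat m v := hv_color.symm
    _ = Fin.ofNat m (lvl (a j)) := congrArg (Fin.ofNat m) hj.symm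

theorem HasGrowingGaps.hasSparsePredecessors {S : Set ℤ} (hS : HasGrowingGaps S) :
    HasSparsePredecessors fun p x => (x - p : ℤ) ∈ S := by
  intro M
  obtain ⟨B, hB⟩ := eventually_atTop.1 (hS M)
  have not_lt_of_mem {x p q : ℕ} (hx : B + M ≤ x) (hq : q < M) (hpS : (x - p : ℤ) ∈ S)
      (hqS : (x - q : ℤ) ∈ S) : ¬ p < q := by
    intro hpq
    have := hB (x - q) (by omega) hqS (x - p) hpS (by omega)
    omega
  filter_upwards [tendsto_natCast_atTop_atTop.eventually_ge_atTop (B + M)] with x hx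
  rintro p ⟨hp, hpS⟩ q ⟨hq, hqS⟩
  by_contra! hne
  exact hne.lt_or_gt.elim (not_lt_of_mem hx hq hpS hqS) (not_lt_of_mem hx hp hqS hpS)

theorem hasGrowingGaps_range {s : ℕ → ℤ} (hs : StrictMono s)
    (hgap : Tendsto (fun i => s (i + 1) - s i) atTop atTop) : HasGrowingGaps (Set.range s) := by
  intro M
  obtain ⟨N, hN⟩ := eventually_atTop.1 (hgap.eventually_gt_atTop M)
  filter_upwards [eventually_ge_atTop (s N)]
  rintro _ hi ⟨i, rfl⟩ _ ⟨j, rfl⟩ hij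
  calc
    M < s (i + 1) - s i := hN i (hs.le_iff_le.1 hi)
    _ ≤ s j - s i := sub_le_sub_right (hs.monotone (hs.lt_iff_lt.1 hij)) _

theorem exists_strictMono_nat_eq_shift {a : ℕ → ℤ} (ha : StrictMono a) :
    ∃ (k : ℕ) (b : ℕ → ℕ), StrictMono b ∧ ∀ i, (b i : ℤ) = a (k + i) := by
  have htop : Tendsto a atTop atTop :=
    tendsto_atTop_atTop_of_monotone' ha.monotone ha.not_bddAbove_range_of_isSuccArchimedean
  obtain ⟨k, hk⟩ := eventually_atTop.1 (htop.eventually_ge_atTop 0)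
  have hb (i : ℕ) : ((a (k + i)).toNat : ℤ) = a (k + i) := Int.toNat_of_nonneg (hk _ (by omega))
  refine ⟨k, fun i => (a (k + i)).toNat, fun i j hij => ?_, hb⟩
  zify
  rw [hb, hb]
  exact ha (by omega)

theorem not_three_walkable_of_growing_gaps_general {S : Set ℤ} (hS : HasGrowingGaps S) {m : ℕ}
    (hm : 3 ≤ m) : ¬ IsKWalkable S m := by
  intro hwalk
  obtain ⟨f, hf⟩ := hS.hasSparsePredecessors.exists_coloring hm
  obtain ⟨a, ha, hstep, hcol⟩ := hwalk fun z => f z.toNat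
  obtain ⟨k, b, hb, hba⟩ := exists_strictMono_nat_eq_shift ha
  have hfb (i : ℕ) : f (b i) = f (a 0).toNat := by
    simpa only [← hba, Int.toNat_natCast] using hcol (k + i)
  refine hf b hb.injective (fun i => ?_) fun i => (hfb i).trans (hfb 0).symm
  rw [hba, hba]
  exact hstep (k + i)

/-- If `S = {s₁ < s₂ < ⋯} ⊆ ℤ⁺` has gaps `s_{i+1} − s_i` tending to infinity, then `S`
is not 3-walkable, so `ord(S) ≤ 2`. -/
theorem not_three_walkable_of_growing_gaps (s : ℕ → ℤ) (hmono : StrictMono s)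
    (hpos : ∀ i, 0 < s i)
    (hgap : ∀ M : ℤ, ∃ N : ℕ, ∀ i ≥ N, M < s (i + 1) - s i) :
    ¬ IsKWalkable (Set.range s) 3 := by
  have htop : Tendsto (fun i => s (i + 1) - s i) atTop atTop :=
    tendsto_atTop_atTop.2 fun M => (hgap M).imp fun _ hN i hi => (hN i hi).le
  exact not_three_walkable_of_growing_gaps_general (hasGrowingGaps_range hmono htop) le_rfl
end
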